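/- Let 0 < d < 4/5. Then ∫₀¹∫₀¹ u^{3-3d} v^{1-d} (1-v)^{1-d} (1-uv)^{-2d} ₂F₁(1,d;2-d;v) ₂F₁(1,d;2-d; u(1-v)/(1-uv)) dv du = [Γ(1-d) Γ(3-3d) Γ(4-5d) / (2 Γ(4-4d) Γ(5-5d))] · ₄F₃(1, d, 2-2d, 3-3d; 2-d, 3-2d, 4-4d; 1). -/

import Mathlib

open Real MeasureTheory

/-- Pochhammer symbol `(a)_k = a (a+1) ⋯ (a+k-1)` for real `a`. -/
noncomputable def poch (a : ℝ) (k : ℕ) : ℝ := (ascPochhammer ℝ k).eval a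

/-- Gaussian hypergeometric function `₂F₁(a,b;c;z)`. -/
noncomputable def hyp2F1 (a b c z : ℝ) : ℝ :=
  ∑' k : ℕ, (poch a k * poch b k) / poch c k * z ^ k / (Nat.factorial k)

/-- Generalized hypergeometric function `₃F₂(a₁,a₂,a₃;b₁,b₂;z)`. -/
noncomputable def hyp3F2 (a₁ a₂ a₃ b₁ b₂ z : ℝ) : ℝ :=
  ∑' k : ℕ, (poch a₁ k * poch a₂ k * poch a₃ k) / (poch b₁ k * poch b₂ k) * z ^ k /
    (Nat.factorial k)

/-- Generalized hypergeometric function `₄F₃(a₁,a₂,a₃,a₄;b₁,b₂,b₃;z)`. -/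
noncomputable def hyp4F3 (a₁ a₂ a₃ a₄ b₁ b₂ b₃ z : ℝ) : ℝ :=
  ∑' k : ℕ, (poch a₁ k * poch a₂ k * poch a₃ k * poch a₄ k) /
    (poch b₁ k * poch b₂ k * poch b₃ k) * z ^ k / (Nat.factorial k)

/-!
Up to elementary factors each of the two `₂F₁` is an incomplete beta integral. After the
substitution `a = u v` the double integral becomes the integral of a nonnegative product of powers
over the simplex `0 < p < a < q < u < 1`, with one factor for each edge of the 5-cycle
`p – a – 1 – q – u – p`. If instead `u` is integrated out first, a single incomplete beta integral
appears; expanding it by the binomial series leaves, term by term, three successive beta integrals,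
and these are the coefficients of the `₄F₃`. Carrying out the integrals and sums in `ℝ≥0∞` justifies
every interchange by Tonelli's theorem; convergence of the `₄F₃` then gives finiteness.
-/

open Filter Asymptotics ProbabilityTheory Set
open scoped ENNReal

section Pochhammer

lemma poch_zero (a : ℝ) : poch a 0 = 1 := by
  simp [poch]

lemma poch_succ (a : ℝ) (k : ℕ) : poch a (k + 1) = poch a k * (a + k) :=
  ascPochhammer_succ_eval k a

lemma poch_pos {a : ℝ} (ha : 0 < a) (k : ℕ) : 0 < poch a k :=
  ascPochhammer_pos k a ha

lemma poch_div_poch_pos {a b : ℝ} (ha : 0 < a) (hb : 0 < b) (k : ℕ) : 0 < poch a k / poch b k :=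
  div_pos (poch_pos ha k) (poch_pos hb k)

lemma poch_one (k : ℕ) : poch 1 k = k.factorial :=
  ascPochhammer_eval_one ℝ k

lemma poch_eq_prod_range (a : ℝ) (k : ℕ) : poch a k = ∏ j ∈ Finset.range k, (a + j) := by
  induction k with
  | zero => simp [poch_zero]
  | succ k ih => rw [poch_succ, ih, Finset.prod_range_succ]

lemma Gamma_add_natCast {a : ℝ} (ha : 0 < a) (k : ℕ) : Gamma (a + k) = poch a k * Gamma a := by
  induction k with
  | zero => simp [poch_zero]
  | succ k ih =>
    rw [poch_succ, Nat.cast_succ, ← add_assoc, Gamma_add_one (by positivity), ih]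
    ring

lemma beta_add_natCast {a b : ℝ} (ha : 0 < a) (hb : 0 < b) (k : ℕ) :
    beta a (b + k) = beta a b * (poch b k / poch (a + b) k) := by
  rw [beta, beta, ← add_assoc, Gamma_add_natCast hb, Gamma_add_natCast (add_pos ha hb)]
  ring

lemma beta_comm (a b : ℝ) : beta a b = beta b a := by
  rw [beta, beta, mul_comm, add_comm]

lemma beta_one_left {b : ℝ} (hb : 0 < b) : beta 1 b = b⁻¹ := by
  have := (Gamma_pos_of_pos hb).ne'
  rw [beta, Gamma_one, add_comm, Gamma_add_one hb.ne']
  field_simp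

lemma hasSum_sub_rpow_neg (b : ℝ) {s c : ℝ} (hs : 0 ≤ s) (hsc : s < c) :
    HasSum (fun k : ℕ ↦ poch b k / k.factorial * (s ^ (k : ℝ) * c ^ (-b - k)))
      ((c - s) ^ (-b)) := by
  have hc : 0 < c := hs.trans_lt hsc
  have hsc' : s / c < 1 := (div_lt_one hc).2 hsc
  have hball : s / c ∈ Metric.eball (0 : ℝ) 1 := by
    simpa [enorm_eq_ofReal (div_nonneg hs hc.le)] using hsc'
  have binomial := ((one_div_one_sub_rpow_hasFPowerSeriesOnBall_zero b).hasSum hball).mul_left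
    (c ^ (-b))
  have choose_eq (k : ℕ) : Ring.choose (b + k - 1) k = poch b k / k.factorial := by
    have := Ring.factorial_nsmul_multichoose_eq_ascPochhammer b k
    rw [nsmul_eq_mul, Polynomial.ascPochhammer_smeval_eq_eval, Ring.multichoose_eq] at this
    rw [poch, ← this]
    field_simp
  rw [zero_add, one_div, ← rpow_neg (by linarith), ← mul_rpow hc.le (by linarith),
    mul_sub, mul_one, mul_div_cancel₀ _ hc.ne'] at binomial
  refine binomial.congr_fun fun k ↦ ?_
  rw [FormalMultilinearSeries.ofScalars_apply_eq, choose_eq, smul_eq_mul, div_pow, rpow_sub hc,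
    rpow_natCast, rpow_natCast]
  ring

lemma isEquivalent_poch_succ {a : ℝ} (ha : 0 < a) :
    (fun n : ℕ ↦ poch a (n + 1)) ~[atTop] fun n ↦ (n : ℝ) ^ a * n.factorial / Gamma a := by
  have hΓ := (Gamma_pos_of_pos ha).ne'
  refine isEquivalent_of_tendsto_one ?_
  have lim := (tendsto_const_nhds (x := Gamma a)).div (GammaSeq_tendsto_Gamma a) hΓ
  rw [div_self hΓ] at lim
  refine lim.congr' ?_
  filter_upwards [eventually_gt_atTop 0] with n hn
  have := (poch_pos ha (n + 1)).ne'
  have : (0 : ℝ) < (n : ℝ) ^ a := by positivity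
  simp only [Pi.div_apply, GammaSeq, ← poch_eq_prod_range]
  field_simp

end Pochhammer

section Hypergeometric

lemma hyp2F1_one (b c z : ℝ) : hyp2F1 1 b c z = ∑' k : ℕ, poch b k / poch c k * z ^ k := by
  refine tsum_congr fun k ↦ ?_
  rw [poch_one]
  field_simp

lemma hyp4F3_one_one (a₂ a₃ a₄ b₁ b₂ b₃ : ℝ) :
    hyp4F3 1 a₂ a₃ a₄ b₁ b₂ b₃ 1 =
      ∑' k : ℕ, poch a₂ k / poch b₁ k * (poch a₃ k / poch b₂ k) * (poch a₄ k / poch b₃ k) := by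
  refine tsum_congr fun k ↦ ?_
  rw [poch_one, one_pow]
  field_simp

lemma hyp4F3_nonneg {a₁ a₂ a₃ a₄ b₁ b₂ b₃ z : ℝ} (ha₁ : 0 < a₁) (ha₂ : 0 < a₂) (ha₃ : 0 < a₃)
    (ha₄ : 0 < a₄) (hb₁ : 0 < b₁) (hb₂ : 0 < b₂) (hb₃ : 0 < b₃) (hz : 0 ≤ z) :
    0 ≤ hyp4F3 a₁ a₂ a₃ a₄ b₁ b₂ b₃ z := by
  refine tsum_nonneg fun k ↦ ?_
  have := poch_pos ha₁ k
  have := poch_pos ha₂ k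
  have := poch_pos ha₃ k
  have := poch_pos ha₄ k
  have := poch_pos hb₁ k
  have := poch_pos hb₂ k
  have := poch_pos hb₃ k
  positivity

lemma isEquivalent_poch_succ_div_poch_succ {a b : ℝ} (ha : 0 < a) (hb : 0 < b) :
    (fun n : ℕ ↦ poch a (n + 1) / poch b (n + 1)) ~[atTop]
      fun n ↦ Gamma b / Gamma a * (n : ℝ) ^ (a - b) := by
  refine ((isEquivalent_poch_succ ha).div (isEquivalent_poch_succ hb)).congr_right ?_
  filter_upwards [eventually_gt_atTop 0] with n hn
  have hn' : (0 : ℝ) < n := by exact_mod_cast hn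
  simp only [Pi.div_apply]
  rw [rpow_sub hn']
  field_simp

lemma summable_poch_div_poch {a₁ a₂ a₃ b₁ b₂ b₃ : ℝ} (ha₁ : 0 < a₁) (ha₂ : 0 < a₂) (ha₃ : 0 < a₃)
    (hb₁ : 0 < b₁) (hb₂ : 0 < b₂) (hb₃ : 0 < b₃) (hab : a₁ + a₂ + a₃ + 1 < b₁ + b₂ + b₃) :
    Summable fun k : ℕ ↦
      poch a₁ k / poch b₁ k * (poch a₂ k / poch b₂ k) * (poch a₃ k / poch b₃ k) := by
  rw [← summable_nat_add_iff 1]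
  have equiv := ((isEquivalent_poch_succ_div_poch_succ ha₁ hb₁).mul
    (isEquivalent_poch_succ_div_poch_succ ha₂ hb₂)).mul
    (isEquivalent_poch_succ_div_poch_succ ha₃ hb₃)
  have rpow_summable : Summable fun n : ℕ ↦ (n : ℝ) ^ (a₁ - b₁ + (a₂ - b₂) + (a₃ - b₃)) :=
    summable_nat_rpow.2 (by linarith)
  refine summable_of_isBigO_nat (rpow_summable.mul_left
    (Gamma b₁ / Gamma a₁ * (Gamma b₂ / Gamma a₂) * (Gamma b₃ / Gamma a₃)))
    (equiv.isBigO.congr' .rfl ?_)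
  filter_upwards [eventually_gt_atTop 0] with n hn
  have hn' : (0 : ℝ) < n := by exact_mod_cast hn
  simp only [Pi.mul_apply]
  rw [rpow_add hn', rpow_add hn']
  ring

end Hypergeometric

section TruncatedPower

/-- The truncated power `t₊ᵉ`, with `0₊ᵉ = 0` for every `e`. It takes values in `ℝ≥0∞` so that
integrals and sums of products of truncated powers can be interchanged freely. -/
noncomputable def truncPow (e t : ℝ) : ℝ≥0∞ :=
  if 0 < t then ENNReal.ofReal (t ^ e) else 0

lemma truncPow_of_pos {t : ℝ} (ht : 0 < t) (e : ℝ) : truncPow e t = ENNReal.ofReal (t ^ e) :=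
  if_pos ht

lemma truncPow_of_nonpos {t : ℝ} (ht : t ≤ 0) (e : ℝ) : truncPow e t = 0 :=
  if_neg ht.not_gt

@[fun_prop]
lemma measurable_truncPow (e : ℝ) : Measurable (truncPow e) :=
  Measurable.ite measurableSet_Ioi (by fun_prop) (by fun_prop)

lemma truncPow_ne_top (e t : ℝ) : truncPow e t ≠ ∞ := by
  unfold truncPow
  split_ifs <;> simp

lemma truncPow_mul_truncPow (a b t : ℝ) : truncPow a t * truncPow b t = truncPow (a + b) t := by
  rcases lt_or_ge 0 t with ht | ht
  · rw [truncPow_of_pos ht, truncPow_of_pos ht, truncPow_of_pos ht, rpow_add ht,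
      ENNReal.ofReal_mul (by positivity)]
  · simp [truncPow_of_nonpos ht]

lemma truncPow_mul {c : ℝ} (hc : 0 < c) (e t : ℝ) :
    truncPow e (c * t) = ENNReal.ofReal (c ^ e) * truncPow e t := by
  rcases lt_or_ge 0 t with ht | ht
  · rw [truncPow_of_pos ht, truncPow_of_pos (mul_pos hc ht), mul_rpow hc.le ht.le,
      ENNReal.ofReal_mul (by positivity)]
  · rw [truncPow_of_nonpos ht, truncPow_of_nonpos (mul_nonpos_of_nonneg_of_nonpos hc.le ht),
      mul_zero]

lemma lintegral_eq_mul_lintegral_add_mul {f : ℝ → ℝ≥0∞} (hf : Measurable f) (l : ℝ) {c : ℝ}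
    (hc : 0 < c) : ∫⁻ x, f x = ENNReal.ofReal c * ∫⁻ x, f (l + c * x) := by
  conv_lhs =>
    rw [← lintegral_add_left_eq_self f l, ← smul_map_volume_mul_left hc.ne', abs_of_pos hc]
  rw [lintegral_smul_measure, lintegral_map (by fun_prop) (by fun_prop), smul_eq_mul]

lemma lintegral_truncPow_mul_truncPow_one_sub {a b : ℝ} (ha : -1 < a) (hb : -1 < b) :
    ∫⁻ x, truncPow a x * truncPow b (1 - x) = ENNReal.ofReal (beta (a + 1) (b + 1)) := by
  have beta_nonneg := (beta_pos (neg_lt_iff_pos_add.1 ha) (neg_lt_iff_pos_add.1 hb)).le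
  have eq_betaPDF (x : ℝ) : truncPow a x * truncPow b (1 - x) =
      ENNReal.ofReal (beta (a + 1) (b + 1)) * betaPDF (a + 1) (b + 1) x := by
    rcases le_or_gt x 0 with hx₀ | hx₀
    · rw [truncPow_of_nonpos hx₀, betaPDF_eq_zero_of_nonpos hx₀, zero_mul, mul_zero]
    rcases le_or_gt 1 x with hx₁ | hx₁
    · rw [truncPow_of_nonpos (sub_nonpos.2 hx₁), betaPDF_eq_zero_of_one_le hx₁, mul_zero, mul_zero]
    have := (beta_pos (neg_lt_iff_pos_add.1 ha) (neg_lt_iff_pos_add.1 hb)).ne'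
    rw [truncPow_of_pos hx₀, truncPow_of_pos (sub_pos.2 hx₁), betaPDF_of_pos_lt_one hx₀ hx₁,
      ← ENNReal.ofReal_mul (by positivity), ← ENNReal.ofReal_mul beta_nonneg, add_sub_cancel_right,
      add_sub_cancel_right]
    field_simp
  rw [lintegral_congr eq_betaPDF, lintegral_const_mul' _ _ ENNReal.ofReal_ne_top,
    lintegral_betaPDF_eq_one (by linarith) (by linarith), mul_one]

lemma lintegral_truncPow_sub_mul_truncPow_sub {a b : ℝ} (ha : -1 < a) (hb : -1 < b) (l r : ℝ) :
    ∫⁻ x, truncPow a (x - l) * truncPow b (r - x) =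
      ENNReal.ofReal (beta (a + 1) (b + 1)) * truncPow (a + b + 1) (r - l) := by
  rcases le_or_gt r l with hlr | hlr
  · have (x : ℝ) : truncPow a (x - l) * truncPow b (r - x) = 0 := by
      rcases le_total x l with hx | hx
      · rw [truncPow_of_nonpos (sub_nonpos.2 hx), zero_mul]
      · rw [truncPow_of_nonpos (sub_nonpos.2 (hlr.trans hx)), mul_zero]
    simp [this, truncPow_of_nonpos (sub_nonpos.2 hlr)]
  · have hc : 0 < r - l := sub_pos.2 hlr
    have rescale (x : ℝ) : truncPow a (l + (r - l) * x - l) * truncPow b (r - (l + (r - l) * x)) =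
        ENNReal.ofReal ((r - l) ^ a) * ENNReal.ofReal ((r - l) ^ b) *
          (truncPow a x * truncPow b (1 - x)) := by
      rw [add_sub_cancel_left, show r - (l + (r - l) * x) = (r - l) * (1 - x) by ring,
        truncPow_mul hc, truncPow_mul hc]
      ring
    rw [lintegral_eq_mul_lintegral_add_mul (by fun_prop) l hc, lintegral_congr rescale,
      lintegral_const_mul' _ _ (by finiteness), lintegral_truncPow_mul_truncPow_one_sub ha hb,
      truncPow_of_pos hc, rpow_add hc, rpow_add hc, rpow_one, ENNReal.ofReal_mul (by positivity),
      ENNReal.ofReal_mul (by positivity)]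
    ring

lemma truncPow_zero_mul_truncPow_sub {b : ℝ} (hb : 0 < b) {s c : ℝ} (hsc : s < c) :
    truncPow 0 s * truncPow (-b) (c - s) =
      ∑' k : ℕ, ENNReal.ofReal (poch b k / k.factorial) *
        (truncPow k s * truncPow (-b - k) c) := by
  rcases le_or_gt s 0 with hs | hs
  · simp [truncPow_of_nonpos hs]
  have binomial := hasSum_sub_rpow_neg b hs.le hsc
  have hc := hs.trans hsc
  have coeff_nonneg (k : ℕ) : 0 ≤ poch b k / k.factorial :=
    div_nonneg (poch_pos hb k).le (by positivity)
  rw [truncPow_of_pos hs, rpow_zero, ENNReal.ofReal_one, one_mul, truncPow_of_pos (sub_pos.2 hsc),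
    ← binomial.tsum_eq, ENNReal.ofReal_tsum_of_nonneg
      (fun k ↦ mul_nonneg (coeff_nonneg k) (by positivity)) binomial.summable]
  refine tsum_congr fun k ↦ ?_
  rw [ENNReal.ofReal_mul (coeff_nonneg k), ENNReal.ofReal_mul (by positivity), truncPow_of_pos hs,
    truncPow_of_pos hc]

end TruncatedPower

section IncompleteBeta

/-- The homogeneous incomplete beta integral `∫₀ˣ (x - s)⁻ᵃ (c - s)⁻ᵇ ds`, for `x ≤ c`. -/
noncomputable def incompleteBeta (a b x c : ℝ) : ℝ≥0∞ :=
  ∫⁻ s, truncPow 0 s * truncPow (-a) (x - s) * truncPow (-b) (c - s)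

lemma incompleteBeta_of_nonpos {x : ℝ} (hx : x ≤ 0) (a b c : ℝ) : incompleteBeta a b x c = 0 := by
  have (s : ℝ) : truncPow 0 s * truncPow (-a) (x - s) * truncPow (-b) (c - s) = 0 := by
    rcases le_total s 0 with hs | hs
    · simp [truncPow_of_nonpos hs]
    · simp [truncPow_of_nonpos (show x - s ≤ 0 by linarith)]
  simp [incompleteBeta, this]

lemma incompleteBeta_eq_tsum {a b x c : ℝ} (ha : a < 1) (hb : 0 < b) (hxc : x ≤ c) :
    incompleteBeta a b x c = ∑' k : ℕ, ENNReal.ofReal ((1 - a)⁻¹ * (poch b k / poch (2 - a) k)) *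
      (truncPow (k + 1 - a) x * truncPow (-b - k) c) := by
  have expand (s : ℝ) : truncPow 0 s * truncPow (-a) (x - s) * truncPow (-b) (c - s) =
      ∑' k : ℕ, ENNReal.ofReal (poch b k / k.factorial) * truncPow (-b - k) c *
        (truncPow k (s - 0) * truncPow (-a) (x - s)) := by
    rcases le_or_gt x s with hs | hs
    · simp [truncPow_of_nonpos (sub_nonpos.2 hs)]
    rw [mul_right_comm, truncPow_zero_mul_truncPow_sub hb (hs.trans_le hxc),
      ← ENNReal.tsum_mul_right]
    refine tsum_congr fun k ↦ ?_
    rw [sub_zero]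
    ring
  have beta_eq (k : ℕ) : poch b k / k.factorial * beta (k + 1) (-a + 1) =
      (1 - a)⁻¹ * (poch b k / poch (2 - a) k) := by
    have h1a : 0 < 1 - a := sub_pos.2 ha
    rw [beta_comm, add_comm (k : ℝ), neg_add_eq_sub, beta_add_natCast h1a one_pos, beta_comm,
      beta_one_left h1a, poch_one, show 1 - a + 1 = 2 - a by ring]
    field_simp
  rw [incompleteBeta, lintegral_congr expand, lintegral_tsum fun k ↦ by fun_prop]
  refine tsum_congr fun k ↦ ?_
  have := truncPow_ne_top (-b - k) c
  have hk : (-1 : ℝ) < k := neg_one_lt_zero.trans_le k.cast_nonneg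
  rw [lintegral_const_mul' _ _ (by finiteness),
    lintegral_truncPow_sub_mul_truncPow_sub hk (by linarith), ← beta_eq,
    ENNReal.ofReal_mul (div_nonneg (poch_pos hb k).le (by positivity)), sub_zero,
    show (k : ℝ) + -a + 1 = k + 1 - a by ring]
  ring

lemma toReal_incompleteBeta {a b x c : ℝ} (ha : a < 1) (hb : 0 < b) (hx : 0 < x) (hxc : x ≤ c) :
    (incompleteBeta a b x c).toReal =
      (1 - a)⁻¹ * (x ^ (1 - a) * c ^ (-b)) * hyp2F1 1 b (2 - a) (x / c) := by
  have hc := hx.trans_le hxc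
  have : 0 < 1 - a := sub_pos.2 ha
  rw [incompleteBeta_eq_tsum ha hb hxc, ENNReal.tsum_toReal_eq, hyp2F1_one, ← tsum_mul_left]
  · refine tsum_congr fun k ↦ ?_
    have := (poch_pos hb k).le
    have := (poch_pos (show 0 < 2 - a by linarith) k).le
    rw [truncPow_of_pos hx, truncPow_of_pos hc, ENNReal.toReal_mul, ENNReal.toReal_mul,
      ENNReal.toReal_ofReal (by positivity), ENNReal.toReal_ofReal (by positivity),
      ENNReal.toReal_ofReal (by positivity), show (k : ℝ) + 1 - a = 1 - a + k by ring,
      rpow_add hx, rpow_sub hc, rpow_natCast, rpow_natCast, div_pow]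
    ring
  · intro k
    have := truncPow_ne_top (k + 1 - a) x
    have := truncPow_ne_top (-b - k) c
    finiteness

end IncompleteBeta

lemma integral_integral_toReal {X Y : Type*} [MeasurableSpace X] [MeasurableSpace Y]
    {μ : Measure X} {ν : Measure Y} [SFinite ν] {f : X → Y → ℝ≥0∞}
    (hf : Measurable (Function.uncurry f)) (hfin : ∫⁻ x, ∫⁻ y, f x y ∂ν ∂μ ≠ ∞) :
    ∫ x, ∫ y, (f x y).toReal ∂ν ∂μ = (∫⁻ x, ∫⁻ y, f x y ∂ν ∂μ).toReal := by
  have inner_lt_top : ∀ᵐ x ∂μ, ∫⁻ y, f x y ∂ν < ∞ := ae_lt_top (by fun_prop) hfin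
  have inner : ∀ᵐ x ∂μ, ∫ y, (f x y).toReal ∂ν = (∫⁻ y, f x y ∂ν).toReal := by
    filter_upwards [inner_lt_top] with x hx
    have hfx : Measurable (f x) := by fun_prop
    exact integral_toReal hfx.aemeasurable (ae_lt_top hfx hx.ne)
  rw [integral_congr_ae inner, integral_toReal (by fun_prop) inner_lt_top]

section Pentagon

/-- The product of powers of differences over the edges of the 5-cycle `p – a – 1 – q – u – p`, on
the simplex `0 < p < a < q < u < 1`; it is extended by zero. -/
noncomputable def pentagonKernel (α β γ δ ε p a q u : ℝ) : ℝ≥0∞ :=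
  truncPow 0 p * truncPow (-α) (a - p) * truncPow (-β) (u - p) * truncPow 0 (q - a) *
    truncPow (-γ) (u - q) * truncPow (-δ) (1 - q) * truncPow (-ε) (1 - a) * truncPow 0 (1 - u)

variable {α β γ δ ε : ℝ}

@[fun_prop]
lemma measurable_pentagonKernel {X : Type*} [MeasurableSpace X] {p a q u : X → ℝ}
    (hp : Measurable p) (ha : Measurable a) (hq : Measurable q) (hu : Measurable u)
    (α β γ δ ε : ℝ) :
    Measurable fun t ↦ pentagonKernel α β γ δ ε (p t) (a t) (q t) (u t) := by
  unfold pentagonKernel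
  fun_prop

lemma lintegral_lintegral_pentagonKernel (α β γ δ ε u a : ℝ) :
    ∫⁻ p, ∫⁻ q, pentagonKernel α β γ δ ε p a q u =
      truncPow (-ε) (1 - a) * truncPow 0 (1 - u) *
        (incompleteBeta α β a u * incompleteBeta γ δ (u - a) (1 - a)) := by
  have translate : incompleteBeta γ δ (u - a) (1 - a) =
      ∫⁻ q, truncPow 0 (q - a) * truncPow (-γ) (u - q) * truncPow (-δ) (1 - q) := by
    rw [incompleteBeta, ← lintegral_sub_right_eq_self _ a]
    simp only [sub_sub_sub_cancel_right]
  have separate (p q : ℝ) : pentagonKernel α β γ δ ε p a q u =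
      truncPow (-ε) (1 - a) * truncPow 0 (1 - u) *
        (truncPow 0 p * truncPow (-α) (a - p) * truncPow (-β) (u - p)) *
        (truncPow 0 (q - a) * truncPow (-γ) (u - q) * truncPow (-δ) (1 - q)) := by
    rw [pentagonKernel]
    ring
  simp_rw [separate]
  rw [translate, incompleteBeta, lintegral_lintegral_mul (by fun_prop) (by fun_prop),
    lintegral_const_mul _ (by fun_prop)]
  ring

lemma lintegral_pentagonKernel (hβ : 0 < β) (hγ : γ < 1) (α δ ε p a q : ℝ) :
    ∫⁻ u, pentagonKernel α β γ δ ε p a q u =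
      ∑' k : ℕ, ENNReal.ofReal ((1 - γ)⁻¹ * (poch β k / poch (2 - γ) k)) *
        (truncPow 0 p * truncPow (-β - k) (1 - p) *
          (truncPow (-α) (a - p) * truncPow (-ε) (1 - a) *
            (truncPow 0 (q - a) * truncPow (k + 1 - γ - δ) (1 - q)))) := by
  have reflect : ∫⁻ u, truncPow (-β) (u - p) * truncPow (-γ) (u - q) * truncPow 0 (1 - u) =
      incompleteBeta γ β (1 - q) (1 - p) := by
    rw [incompleteBeta, ← lintegral_sub_left_eq_self _ 1]
    refine lintegral_congr fun s ↦ ?_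
    rw [sub_right_comm 1 s, sub_right_comm 1 s, sub_sub_cancel]
    ring
  have separate (u : ℝ) : pentagonKernel α β γ δ ε p a q u =
      truncPow 0 p * truncPow (-α) (a - p) * truncPow 0 (q - a) * truncPow (-δ) (1 - q) *
        truncPow (-ε) (1 - a) *
        (truncPow (-β) (u - p) * truncPow (-γ) (u - q) * truncPow 0 (1 - u)) := by
    rw [pentagonKernel]
    ring
  rw [lintegral_congr separate, lintegral_const_mul _ (by fun_prop), reflect]
  rcases le_or_gt a p with hap | hpa
  · simp [truncPow_of_nonpos (sub_nonpos.2 hap)]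
  rcases le_or_gt q a with hqa | haq
  · simp [truncPow_of_nonpos (sub_nonpos.2 hqa)]
  rw [incompleteBeta_eq_tsum hγ hβ (by linarith), ← ENNReal.tsum_mul_left]
  refine tsum_congr fun k ↦ ?_
  rw [sub_eq_add_neg _ δ, ← truncPow_mul_truncPow]
  ring

lemma lintegral_lintegral_lintegral_truncPow {a₁ b₁ a₂ b₂ a₃ b₃ : ℝ} (ha₁ : -1 < a₁) (ha₂ : -1 < a₂)
    (ha₃ : -1 < a₃) (hb₃ : -1 < b₃) (hb₂ : -2 < b₂ + a₃ + b₃)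
    (hb₁ : -3 < b₁ + a₂ + b₂ + a₃ + b₃) :
    ∫⁻ p, ∫⁻ a, ∫⁻ q, truncPow a₁ p * truncPow b₁ (1 - p) *
        (truncPow a₂ (a - p) * truncPow b₂ (1 - a) * (truncPow a₃ (q - a) * truncPow b₃ (1 - q))) =
      ENNReal.ofReal (beta (a₁ + 1) (b₁ + a₂ + b₂ + a₃ + b₃ + 3)) *
        ENNReal.ofReal (beta (a₂ + 1) (b₂ + a₃ + b₃ + 2)) *
        ENNReal.ofReal (beta (a₃ + 1) (b₃ + 1)) := by
  set B₃ := ENNReal.ofReal (beta (a₃ + 1) (b₃ + 1))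
  set B₂ := ENNReal.ofReal (beta (a₂ + 1) (b₂ + a₃ + b₃ + 2)) with hB₂
  have inner (p a : ℝ) : ∫⁻ q, truncPow a₁ p * truncPow b₁ (1 - p) *
        (truncPow a₂ (a - p) * truncPow b₂ (1 - a) * (truncPow a₃ (q - a) * truncPow b₃ (1 - q))) =
      B₃ * (truncPow a₁ p * truncPow b₁ (1 - p)) *
        (truncPow a₂ (a - p) * truncPow (b₂ + a₃ + b₃ + 1) (1 - a)) := by
    rw [lintegral_const_mul _ (by fun_prop), lintegral_const_mul _ (by fun_prop),
      lintegral_truncPow_sub_mul_truncPow_sub ha₃ hb₃,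
      show b₂ + a₃ + b₃ + 1 = b₂ + (a₃ + b₃ + 1) by ring, ← truncPow_mul_truncPow b₂]
    ring
  have middle (p : ℝ) : ∫⁻ a, B₃ * (truncPow a₁ p * truncPow b₁ (1 - p)) *
        (truncPow a₂ (a - p) * truncPow (b₂ + a₃ + b₃ + 1) (1 - a)) =
      B₂ * B₃ * (truncPow a₁ (p - 0) * truncPow (b₁ + a₂ + b₂ + a₃ + b₃ + 2) (1 - p)) := by
    rw [lintegral_const_mul _ (by fun_prop),
      lintegral_truncPow_sub_mul_truncPow_sub ha₂ (by linarith),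
      show b₁ + a₂ + b₂ + a₃ + b₃ + 2 = b₁ + (a₂ + (b₂ + a₃ + b₃ + 1) + 1) by ring,
      ← truncPow_mul_truncPow b₁, sub_zero, hB₂]
    ring_nf
  simp_rw [inner, middle]
  rw [lintegral_const_mul _ (by fun_prop),
    lintegral_truncPow_sub_mul_truncPow_sub ha₁ (by linarith), sub_zero,
    truncPow_of_pos one_pos, one_rpow, ENNReal.ofReal_one, mul_one]
  ring_nf

lemma lintegral_pentagonKernel_swap (α β γ δ ε : ℝ) :
    ∫⁻ u, ∫⁻ a, ∫⁻ p, ∫⁻ q, pentagonKernel α β γ δ ε p a q u =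
      ∫⁻ p, ∫⁻ a, ∫⁻ q, ∫⁻ u, pentagonKernel α β γ δ ε p a q u := by
  calc
    _ = ∫⁻ u, ∫⁻ p, ∫⁻ a, ∫⁻ q, pentagonKernel α β γ δ ε p a q u :=
      lintegral_congr fun u ↦ lintegral_lintegral_swap (by fun_prop)
    _ = ∫⁻ p, ∫⁻ u, ∫⁻ a, ∫⁻ q, pentagonKernel α β γ δ ε p a q u :=
      lintegral_lintegral_swap (by fun_prop)
    _ = ∫⁻ p, ∫⁻ a, ∫⁻ u, ∫⁻ q, pentagonKernel α β γ δ ε p a q u :=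
      lintegral_congr fun p ↦ lintegral_lintegral_swap (by fun_prop)
    _ = _ := lintegral_congr fun p ↦ lintegral_congr fun a ↦ lintegral_lintegral_swap (by fun_prop)

lemma lintegral_pentagonKernel_eq_tsum (hα : α < 1) (hβ : 0 < β) (hγ : γ < 1) (hγδ : γ + δ < 2)
    (hγδε : γ + δ + ε < 3) (hsum : α + β + γ + δ + ε < 4) :
    ∫⁻ u, ∫⁻ a, ∫⁻ p, ∫⁻ q, pentagonKernel α β γ δ ε p a q u =
      ∑' k : ℕ, ENNReal.ofReal ((1 - γ)⁻¹ * (poch β k / poch (2 - γ) k)) *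
        (ENNReal.ofReal (beta 1 (4 - (α + β + γ + δ + ε))) *
          ENNReal.ofReal (beta (1 - α) (3 - γ - δ - ε + k)) *
          ENNReal.ofReal (beta 1 (2 - γ - δ + k))) := by
  have term (k : ℕ) : ∫⁻ p, ∫⁻ a, ∫⁻ q, truncPow 0 p * truncPow (-β - k) (1 - p) *
          (truncPow (-α) (a - p) * truncPow (-ε) (1 - a) *
            (truncPow 0 (q - a) * truncPow (k + 1 - γ - δ) (1 - q))) =
      ENNReal.ofReal (beta 1 (4 - (α + β + γ + δ + ε))) *
          ENNReal.ofReal (beta (1 - α) (3 - γ - δ - ε + k)) *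
          ENNReal.ofReal (beta 1 (2 - γ - δ + k)) := by
    have : (0 : ℝ) ≤ k := k.cast_nonneg
    rw [lintegral_lintegral_lintegral_truncPow] <;> first | linarith | ring_nf
  simp_rw [lintegral_pentagonKernel_swap, lintegral_pentagonKernel hβ hγ]
  rw [lintegral_congr fun p ↦ (lintegral_congr fun a ↦ lintegral_tsum fun k ↦ by fun_prop).trans
    (lintegral_tsum fun k ↦ by fun_prop), lintegral_tsum fun k ↦ by fun_prop]
  refine tsum_congr fun k ↦ ?_
  simp_rw [lintegral_const_mul' _ _ ENNReal.ofReal_ne_top, term]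

lemma lintegral_pentagonKernel_eq_hyp4F3 (hα : α < 1) (hβ : 0 < β) (hγ : γ < 1) (hγδ : γ + δ < 2)
    (hγδε : γ + δ + ε < 3) (hαβγ : α + β + γ < 3) (hsum : α + β + γ + δ + ε < 4) :
    ∫⁻ u, ∫⁻ a, ∫⁻ p, ∫⁻ q, pentagonKernel α β γ δ ε p a q u =
      ENNReal.ofReal (beta (1 - α) (3 - γ - δ - ε) /
        ((1 - γ) * (2 - γ - δ) * (4 - (α + β + γ + δ + ε))) *
        hyp4F3 1 β (2 - γ - δ) (3 - γ - δ - ε) (2 - γ) (3 - γ - δ) (4 - α - γ - δ - ε) 1) := by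
  have h₂ : 0 < 2 - γ - δ := by linarith
  have h₃ : 0 < 3 - γ - δ - ε := by linarith
  have h₄ : 0 < 4 - (α + β + γ + δ + ε) := by linarith
  have hα' : 0 < 1 - α := sub_pos.2 hα
  have hγ' : 0 < 1 - γ := sub_pos.2 hγ
  have hB := beta_pos hα' h₃
  have ratio₁ := poch_div_poch_pos hβ (show 0 < 2 - γ by linarith)
  have ratio₂ := poch_div_poch_pos h₂ (show 0 < 3 - γ - δ by linarith)
  have ratio₃ := poch_div_poch_pos h₃ (show 0 < 4 - α - γ - δ - ε by linarith)
  rw [lintegral_pentagonKernel_eq_tsum hα hβ hγ hγδ hγδε hsum, hyp4F3_one_one, ← tsum_mul_left,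
    ENNReal.ofReal_tsum_of_nonneg]
  · refine tsum_congr fun k ↦ ?_
    have := ratio₁ k
    have := ratio₂ k
    have := ratio₃ k
    rw [beta_add_natCast hα' h₃, beta_add_natCast one_pos h₂, beta_one_left h₂, beta_one_left h₄,
      show 1 - α + (3 - γ - δ - ε) = 4 - α - γ - δ - ε by ring,
      show 1 + (2 - γ - δ) = 3 - γ - δ by ring, ← ENNReal.ofReal_mul (by positivity),
      ← ENNReal.ofReal_mul (by positivity), ← ENNReal.ofReal_mul (by positivity)]
    congr 1
    field_simp
  · exact fun k ↦ mul_nonneg (by positivity)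
      (mul_pos (mul_pos (ratio₁ k) (ratio₂ k)) (ratio₃ k)).le
  · refine (summable_poch_div_poch hβ h₂ h₃ ?_ ?_ ?_ ?_).mul_left _ <;> linarith

lemma lintegral_lintegral_pentagonKernel_eq_zero {u a : ℝ} (h : ¬ (0 < a ∧ a < u ∧ u < 1))
    (α β γ δ ε : ℝ) : ∫⁻ p, ∫⁻ q, pentagonKernel α β γ δ ε p a q u = 0 := by
  rw [lintegral_lintegral_pentagonKernel]
  rcases le_or_gt a 0 with ha | ha
  · simp [incompleteBeta_of_nonpos ha]
  rcases le_or_gt u a with hua | hau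
  · simp [incompleteBeta_of_nonpos (sub_nonpos.2 hua)]
  rcases le_or_gt 1 u with hu | hu
  · simp [truncPow_of_nonpos (sub_nonpos.2 hu)]
  · exact absurd ⟨ha, hau, hu⟩ h

lemma mul_toReal_lintegral_lintegral_pentagonKernel (hα : α < 1) (hβ : 0 < β) (hγ : γ < 1)
    (hδ : 0 < δ) (ε : ℝ) {u v : ℝ} (hu : u ∈ Ioo 0 1) (hv : v ∈ Ioo 0 1) :
    (1 - α) * (1 - γ) *
        (u * (∫⁻ p, ∫⁻ q, pentagonKernel α β γ δ ε p (u * v) q u).toReal) =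
      u ^ (3 - α - β - γ) * v ^ (1 - α) * (1 - v) ^ (1 - γ) * (1 - u * v) ^ (-(δ + ε)) *
        hyp2F1 1 β (2 - α) v * hyp2F1 1 δ (2 - γ) (u * (1 - v) / (1 - u * v)) := by
  obtain ⟨hu₀, hu₁⟩ := hu
  obtain ⟨hv₀, hv₁⟩ := hv
  have huv₀ : 0 < u * v := mul_pos hu₀ hv₀
  have huv : u * v < u := mul_lt_of_lt_one_right hu₀ hv₁
  have huv₁ : 0 < 1 - u * v := by linarith
  have hα' : 0 < 1 - α := sub_pos.2 hα
  have hγ' : 0 < 1 - γ := sub_pos.2 hγ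
  have hv' : 0 < 1 - v := sub_pos.2 hv₁
  have u_pow : u ^ (3 - α - β - γ) = u * u ^ (1 - α) * u ^ (-β) * u ^ (1 - γ) := by
    rw [← rpow_one_add' hu₀.le (by linarith), ← rpow_add hu₀, ← rpow_add hu₀]
    ring_nf
  rw [lintegral_lintegral_pentagonKernel, truncPow_of_pos huv₁, truncPow_of_pos (sub_pos.2 hu₁),
    rpow_zero, ENNReal.toReal_mul, ENNReal.toReal_mul, ENNReal.toReal_mul,
    ENNReal.toReal_ofReal (by positivity), ENNReal.toReal_ofReal zero_le_one,
    toReal_incompleteBeta hα hβ huv₀ huv.le,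
    toReal_incompleteBeta hγ hδ (sub_pos.2 huv) (by linarith), mul_div_cancel_left₀ v hu₀.ne',
    show u - u * v = u * (1 - v) by ring, mul_rpow hu₀.le hv₀.le, mul_rpow hu₀.le hv'.le,
    neg_add, rpow_add huv₁, u_pow]
  field_simp

lemma intervalIntegral_mul_toReal_pentagonKernel (α β γ δ ε : ℝ) :
    ∫ u in (0:ℝ)..1, ∫ v in (0:ℝ)..1,
        u * (∫⁻ p, ∫⁻ q, pentagonKernel α β γ δ ε p (u * v) q u).toReal =
      ∫ u, ∫ a, (∫⁻ p, ∫⁻ q, pentagonKernel α β γ δ ε p a q u).toReal := by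
  set marginal : ℝ → ℝ → ℝ :=
    fun u a ↦ (∫⁻ p, ∫⁻ q, pentagonKernel α β γ δ ε p a q u).toReal
  have marginal_eq_zero {u a : ℝ} (h : ¬ (0 < a ∧ a < u ∧ u < 1)) : marginal u a = 0 := by
    simp [marginal, lintegral_lintegral_pentagonKernel_eq_zero h]
  have inner (u : ℝ) : ∫ v in (0:ℝ)..1, u * marginal u (u * v) = ∫ a, marginal u a := by
    rw [intervalIntegral.integral_const_mul, intervalIntegral.mul_integral_comp_mul_left, mul_zero,
      mul_one, intervalIntegral.integral_eq_integral_of_support_subset]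
    intro a ha
    have := not_not.1 (mt marginal_eq_zero ha)
    exact ⟨this.1, this.2.1.le⟩
  rw [intervalIntegral.integral_congr fun u _ ↦ inner u,
    intervalIntegral.integral_eq_integral_of_support_subset]
  intro u hu
  by_contra hu'
  refine hu (integral_eq_zero_of_ae (.of_forall fun a ↦ marginal_eq_zero fun h ↦ hu' ?_))
  exact ⟨h.1.trans h.2.1, h.2.2.le⟩

theorem double_integral_J2_general (hα : α < 1) (hβ : 0 < β) (hγ : γ < 1) (hδ : 0 < δ)
    (hγδ : γ + δ < 2) (hγδε : γ + δ + ε < 3) (hαβγ : α + β + γ < 3)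
    (hsum : α + β + γ + δ + ε < 4) :
    (∫ u in (0:ℝ)..1, ∫ v in (0:ℝ)..1,
      u ^ (3 - α - β - γ) * v ^ (1 - α) * (1 - v) ^ (1 - γ) * (1 - u * v) ^ (-(δ + ε)) *
        hyp2F1 1 β (2 - α) v * hyp2F1 1 δ (2 - γ) (u * (1 - v) / (1 - u * v)))
    = (1 - α) * beta (1 - α) (3 - γ - δ - ε) / ((2 - γ - δ) * (4 - (α + β + γ + δ + ε))) *
        hyp4F3 1 β (2 - γ - δ) (3 - γ - δ - ε) (2 - γ) (3 - γ - δ) (4 - α - γ - δ - ε) 1 := by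
  have eq_hyp4F3 := lintegral_pentagonKernel_eq_hyp4F3 hα hβ hγ hγδ hγδε hαβγ hsum
  calc
    _ = ∫ u in (0:ℝ)..1, ∫ v in (0:ℝ)..1, (1 - α) * (1 - γ) *
        (u * (∫⁻ p, ∫⁻ q, pentagonKernel α β γ δ ε p (u * v) q u).toReal) :=
      intervalIntegral.integral_congr_Ioo_of_le zero_le_one fun u hu ↦
        intervalIntegral.integral_congr_Ioo_of_le zero_le_one fun v hv ↦
          (mul_toReal_lintegral_lintegral_pentagonKernel hα hβ hγ hδ ε hu hv).symm
    _ = (1 - α) * (1 - γ) *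
        (∫⁻ u, ∫⁻ a, ∫⁻ p, ∫⁻ q, pentagonKernel α β γ δ ε p a q u).toReal := by
      simp only [intervalIntegral.integral_const_mul]
      rw [← integral_integral_toReal (by fun_prop) (eq_hyp4F3 ▸ ENNReal.ofReal_ne_top),
        ← intervalIntegral_mul_toReal_pentagonKernel]
      simp only [intervalIntegral.integral_const_mul]
    _ = _ := by
      have hα' : 0 < 1 - α := sub_pos.2 hα
      have hγ' : 0 < 1 - γ := sub_pos.2 hγ
      have h₂ : 0 < 2 - γ - δ := by linarith
      have h₃ : 0 < 3 - γ - δ - ε := by linarith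
      have h₄ : 0 < 4 - (α + β + γ + δ + ε) := by linarith
      have := beta_pos hα' h₃
      have := hyp4F3_nonneg one_pos hβ h₂ h₃ (show 0 < 2 - γ by linarith)
        (show 0 < 3 - γ - δ by linarith) (show 0 < 4 - α - γ - δ - ε by linarith) zero_le_one
      rw [eq_hyp4F3, ENNReal.toReal_ofReal (by positivity)]
      field_simp

end Pentagon

lemma one_sub_mul_beta_div_eq_Gamma {d : ℝ} (hd : d < 4 / 5) :
    (1 - d) * beta (1 - d) (3 - 3 * d) / ((2 - 2 * d) * (4 - 5 * d)) =
      Gamma (1 - d) * Gamma (3 - 3 * d) * Gamma (4 - 5 * d) /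
        (2 * Gamma (4 - 4 * d) * Gamma (5 - 5 * d)) := by
  have h₁ : 0 < 1 - d := by linarith
  have h₄ : 0 < 4 - 5 * d := by linarith
  rw [beta, show 1 - d + (3 - 3 * d) = 4 - 4 * d by ring,
    show 5 - 5 * d = 4 - 5 * d + 1 by ring, Gamma_add_one h₄.ne',
    show 2 - 2 * d = 2 * (1 - d) by ring, ← mul_assoc,
    mul_div_mul_right _ _ (Gamma_pos_of_pos h₄).ne']
  field_simp

theorem double_integral_J2 (d : ℝ) (hd0 : 0 < d) (hd1 : d < 4 / 5) :
    (∫ u in (0:ℝ)..1, ∫ v in (0:ℝ)..1,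
      u ^ (3 - 3 * d) * v ^ (1 - d) * (1 - v) ^ (1 - d) * (1 - u * v) ^ (-(2 * d)) *
        hyp2F1 1 d (2 - d) v * hyp2F1 1 d (2 - d) (u * (1 - v) / (1 - u * v)))
    = Real.Gamma (1 - d) * Real.Gamma (3 - 3 * d) * Real.Gamma (4 - 5 * d) /
        (2 * Real.Gamma (4 - 4 * d) * Real.Gamma (5 - 5 * d)) *
        hyp4F3 1 d (2 - 2 * d) (3 - 3 * d) (2 - d) (3 - 2 * d) (4 - 4 * d) 1 := by
  have general := double_integral_J2_general (α := d) (β := d) (γ := d) (δ := d) (ε := d)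
    (by linarith) hd0 (by linarith) hd0 (by linarith) (by linarith) (by linarith) (by linarith)
  rw [show 3 - d - d - d = 3 - 3 * d by ring, show 3 - d - d = 3 - 2 * d by ring,
    show 2 - d - d = 2 - 2 * d by ring, show 4 - d - d - d - d = 4 - 4 * d by ring,
    show 4 - (d + d + d + d + d) = 4 - 5 * d by ring, ← two_mul] at general
  rw [general, one_sub_mul_beta_div_eq_Gamma hd1]
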